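/- Near-equidistant corollary: for any 5-agent instance with |P i − 1/5| ≤ 1/10 for all i, PCD ≤ (4/3) · OPT (and in particular PCD ≤ 1.34 · OPT). -/

import Mathlib

open Finset

/-- Position of agent `i` on the unit circle: the image of the partial sum
`∑_{j < i} d j`, so that `d i` is the clockwise arc from agent `i` to agent `i+1`. -/
noncomputable def pos (d : Fin 5 → ℝ) (i : Fin 5) : AddCircle (1 : ℝ) :=
  ((∑ j ∈ Finset.Iio i, d j : ℝ) : AddCircle (1 : ℝ))

/-- Social cost of placing the facility at `a`. -/
noncomputable def SC (d : Fin 5 → ℝ) (a : AddCircle (1 : ℝ)) : ℝ :=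
  ∑ i : Fin 5, dist (pos d i) a

/-- Social cost of placing the facility at agent `i`'s location. -/
noncomputable def C (d : Fin 5 → ℝ) (i : Fin 5) : ℝ := SC d (pos d i)

/-- The optimal social cost. -/
noncomputable def OPT (d : Fin 5 → ℝ) : ℝ := ⨅ a : AddCircle (1 : ℝ), SC d a

/-- The length of the arc facing agent `i` (indices mod 5). -/
noncomputable def P (d : Fin 5 → ℝ) (i : Fin 5) : ℝ := d (i + 2)

/-- Expected social cost of the PCD mechanism. -/
noncomputable def PCD (d : Fin 5 → ℝ) : ℝ := ∑ i : Fin 5, P d i * C d i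

/-!
Let `s i = d i + d (i + 1)` be the length of the clockwise arc from agent `i` to agent `i + 2`.

*Lower bound on `OPT`.* By the triangle inequality, every social cost is at least half the perimeter
of the pentagram joining agents `i` and `i + 2`, whose sides have length `min (s i) (1 - s i)`.
Since `∑ i, s i = 2`, that perimeter is `2` minus the total excess `2 * s i - 1` over the arcs
longer than a half circle. There are at most two such arcs, with consecutive indices, because `s i`
and `s (i + 2)` measure disjoint arcs; for gaps between `1/10` and `3/10` their total excess is at
most `1/5`, so `OPT ≥ 9/10`.

*Upper bound on `PCD`.* From agent `i` the other agents are reached along arcs of total length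
`s i + s (i + 3) + s (i + 4)`. Thus `s i` is charged exactly to the agents `i`, `i + 1`, `i + 2`,
whose facing arcs make up the complementary length `1 - s i`. Hence `PCD ≤ ∑ i, s i * (1 - s i)`,
which is at most `2 - 4/5 = 6/5` by Cauchy–Schwarz.
-/

section Pentagon

variable {M : Type*} [AddCommMonoid M]

lemma sum_univ_five_rotate (f : Fin 5 → M) (k : Fin 5) :
    ∑ i, f i = f k + f (k + 1) + f (k + 2) + f (k + 3) + f (k + 4) := by
  rw [← Equiv.sum_comp (Equiv.addLeft k), Fin.sum_univ_five]
  simp only [Equiv.coe_addLeft, add_zero]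

-- The support of `f` is an independent set of the pentagram `i ∼ i + 2`, hence lies on a side of
-- the pentagon.
lemma exists_sum_eq_add_of_eq_zero_or_eq_zero (f : Fin 5 → M) (hf : ∀ i, f i = 0 ∨ f (i + 2) = 0) :
    ∃ i, ∑ j, f j = f i + f (i + 1) := by
  by_cases hzero : ∀ i, f i = 0
  · exact ⟨0, by simp only [hzero, sum_const_zero, add_zero]⟩
  · obtain ⟨k, hk⟩ := not_forall.mp hzero
    have hk₂ : f (k + 2) = 0 := (hf k).resolve_left hk
    have hk₃ : f (k + 3) = 0 :=
      (hf (k + 3)).resolve_right (by simpa only [add_assoc, Fin.reduceAdd, add_zero] using hk)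
    rcases hf (k + 4) with hk₄ | hk₁
    · exact ⟨k, by simp only [sum_univ_five_rotate f k, hk₂, hk₃, hk₄, add_zero]⟩
    · refine ⟨k + 4, ?_⟩
      simp only [add_assoc, Fin.reduceAdd, add_zero] at hk₁ ⊢
      rw [sum_univ_five_rotate f k, hk₁, hk₂, hk₃, add_zero, add_zero, add_zero, add_comm]

end Pentagon

lemma sum_max_two_mul_sub_one_le {s : Fin 5 → ℝ} {ε : ℝ} (hε : 0 ≤ ε)
    (hskip : ∀ i, s i + s (i + 2) ≤ 1) (hone : ∀ i, s i ≤ 1 / 2 + ε)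
    (htwo : ∀ i, s i + s (i + 1) ≤ 1 + ε) :
    ∑ i, max (2 * s i - 1) 0 ≤ 2 * ε := by
  have hindep : ∀ i, max (2 * s i - 1) 0 = 0 ∨ max (2 * s (i + 2) - 1) 0 = 0 := by
    intro i
    simp only [max_eq_right_iff]
    by_contra! h
    linarith [hskip i]
  obtain ⟨i, hi⟩ := exists_sum_eq_add_of_eq_zero_or_eq_zero _ hindep
  rw [hi]
  rcases max_cases (2 * s i - 1) 0 with ⟨h, -⟩ | ⟨h, -⟩ <;>
    rcases max_cases (2 * s (i + 1) - 1) 0 with ⟨h', -⟩ | ⟨h', -⟩ <;>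
    linarith [hone i, hone (i + 1), htwo i]

lemma sum_dist_perm_le {ι α : Type*} [Fintype ι] [PseudoMetricSpace α] (x : ι → α)
    (σ : Equiv.Perm ι) (a : α) :
    ∑ i, dist (x i) (x (σ i)) ≤ 2 * ∑ i, dist (x i) a :=
  calc ∑ i, dist (x i) (x (σ i))
      ≤ ∑ i, (dist (x i) a + dist (x (σ i)) a) := sum_le_sum fun _ _ ↦ dist_triangle_right _ _ _
    _ = 2 * ∑ i, dist (x i) a := by
      rw [sum_add_distrib, Equiv.sum_comp σ fun i ↦ dist (x i) a, two_mul]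

lemma norm_coe_addCircle_le_abs (p u : ℝ) : ‖(u : AddCircle p)‖ ≤ |u| :=
  QuotientAddGroup.norm_mk_le_norm

lemma min_le_norm_coe_addCircle {p : ℝ} (hp : 0 ≤ p) (u : ℝ) :
    min u (p - u) ≤ ‖(u : AddCircle p)‖ := by
  rw [AddCircle.norm_eq]
  set n := round (p⁻¹ * u)
  rcases le_or_gt n 0 with hn | hn
  · have hn' : (n : ℝ) * p ≤ 0 := mul_nonpos_of_nonpos_of_nonneg (mod_cast hn) hp
    exact (min_le_left _ _).trans (by linarith [le_abs_self (u - n * p)])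
  · have hn' : p ≤ n * p := le_mul_of_one_le_left hp (mod_cast hn)
    exact (min_le_right _ _).trans (by linarith [neg_le_abs (u - n * p)])

/-- The length of the clockwise arc from agent `i` to agent `i + 2`. -/
def doubleArc (d : Fin 5 → ℝ) (i : Fin 5) : ℝ := d i + d (i + 1)

section Instance

variable {d : Fin 5 → ℝ}

lemma doubleArc_nonneg (hd : ∀ i, 0 ≤ d i) (i : Fin 5) : 0 ≤ doubleArc d i :=
  add_nonneg (hd i) (hd (i + 1))

lemma sum_doubleArc (hsum : ∑ i, d i = 1) : ∑ i, doubleArc d i = 2 := by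
  have hshift : ∑ i, d (i + 1) = ∑ i, d i := Equiv.sum_comp (Equiv.addRight 1) d
  simp only [doubleArc, sum_add_distrib, hshift, hsum, one_add_one_eq_two]

lemma one_sub_doubleArc (hsum : ∑ i, d i = 1) (i : Fin 5) :
    1 - doubleArc d i = d (i + 2) + d (i + 3) + d (i + 4) := by
  rw [← hsum, sum_univ_five_rotate d i, doubleArc]
  ring

lemma pos_add_one (hsum : ∑ i, d i = 1) (i : Fin 5) : pos d (i + 1) = pos d i + (d i : ℝ) := by
  have hend : pos d i + (d i : ℝ) = ((∑ j ∈ Iic i, d j : ℝ) : AddCircle (1 : ℝ)) := by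
    rw [pos, ← AddCircle.coe_add, ← Iio_insert, sum_insert notMem_Iio_self, add_comm]
  rw [hend]
  rcases eq_or_ne i (Fin.last 4) with rfl | hi
  · have huniv : Iic (Fin.last 4) = univ := Iic_top
    have hempty : Iio (Fin.last 4 + 1) = ∅ := by decide
    rw [pos, hempty, huniv, hsum, sum_empty, AddCircle.coe_zero, AddCircle.coe_period]
  · rw [pos, Fin.Iio_add_one_eq_Iic (by have := Fin.val_lt_last hi; omega)]

lemma pos_add_two (hsum : ∑ i, d i = 1) (i : Fin 5) :
    pos d (i + 2) = pos d i + (doubleArc d i : ℝ) := by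
  have htwo : i + 2 = i + 1 + 1 := by simp only [add_assoc, Fin.reduceAdd]
  rw [htwo, pos_add_one hsum, pos_add_one hsum, doubleArc, AddCircle.coe_add, add_assoc]

lemma dist_pos_add_one_le (hd : ∀ i, 0 ≤ d i) (hsum : ∑ i, d i = 1) (i : Fin 5) :
    dist (pos d i) (pos d (i + 1)) ≤ d i := by
  rw [pos_add_one hsum, dist_self_add_right]
  exact (norm_coe_addCircle_le_abs 1 _).trans_eq (abs_of_nonneg (hd i))

lemma dist_pos_add_two_le (hd : ∀ i, 0 ≤ d i) (hsum : ∑ i, d i = 1) (i : Fin 5) :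
    dist (pos d i) (pos d (i + 2)) ≤ doubleArc d i := by
  rw [pos_add_two hsum, dist_self_add_right]
  exact (norm_coe_addCircle_le_abs 1 _).trans_eq (abs_of_nonneg (doubleArc_nonneg hd i))

lemma doubleArc_sub_max_le_dist_pos_add_two (hsum : ∑ i, d i = 1) (i : Fin 5) :
    doubleArc d i - max (2 * doubleArc d i - 1) 0 ≤ dist (pos d i) (pos d (i + 2)) := by
  have hmin : doubleArc d i - max (2 * doubleArc d i - 1) 0
      = min (doubleArc d i) (1 - doubleArc d i) := by
    rw [← min_sub_sub_left, sub_zero, min_comm]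
    ring_nf
  rw [pos_add_two hsum, dist_self_add_right, hmin]
  exact min_le_norm_coe_addCircle zero_le_one (doubleArc d i)

lemma one_sub_le_SC {ε : ℝ} (hε : 0 ≤ ε) (hd : ∀ i, 0 ≤ d i) (hsum : ∑ i, d i = 1)
    (hone : ∀ i, doubleArc d i ≤ 1 / 2 + ε)
    (htwo : ∀ i, doubleArc d i + doubleArc d (i + 1) ≤ 1 + ε) (a : AddCircle (1 : ℝ)) :
    1 - ε ≤ SC d a := by
  have hskip : ∀ i, doubleArc d i + doubleArc d (i + 2) ≤ 1 := by
    intro i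
    have hcompl := one_sub_doubleArc hsum i
    have hnext : doubleArc d (i + 2) = d (i + 2) + d (i + 3) := by
      simp only [doubleArc, add_assoc, Fin.reduceAdd]
    linarith [hd (i + 4)]
  have hpentagram : 2 * (1 - ε) ≤ 2 * SC d a :=
    calc 2 * (1 - ε)
        ≤ ∑ i, (doubleArc d i - max (2 * doubleArc d i - 1) 0) := by
          rw [sum_sub_distrib, sum_doubleArc hsum]
          linarith [sum_max_two_mul_sub_one_le hε hskip hone htwo]
      _ ≤ ∑ i, dist (pos d i) (pos d (i + 2)) :=
          sum_le_sum fun i _ ↦ doubleArc_sub_max_le_dist_pos_add_two hsum i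
      _ ≤ 2 * SC d a := sum_dist_perm_le (pos d) (Equiv.addRight 2) a
  linarith

lemma C_le_doubleArc_add_add (hd : ∀ i, 0 ≤ d i) (hsum : ∑ i, d i = 1) (i : Fin 5) :
    C d i ≤ doubleArc d i + doubleArc d (i + 3) + doubleArc d (i + 4) := by
  have hright := dist_pos_add_one_le hd hsum i
  have hright₂ := dist_pos_add_two_le hd hsum i
  have hleft₂ := dist_pos_add_two_le hd hsum (i + 3)
  have hleft := dist_pos_add_one_le hd hsum (i + 4)
  have hsides : doubleArc d (i + 4) = d (i + 4) + d i := by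
    simp only [doubleArc, add_assoc, Fin.reduceAdd, add_zero]
  simp only [add_assoc, Fin.reduceAdd, add_zero] at hleft hleft₂
  rw [C, SC, sum_univ_five_rotate _ i, dist_self, dist_comm (pos d (i + 1)),
    dist_comm (pos d (i + 2))]
  linarith

lemma PCD_le_sum_doubleArc_mul (hd : ∀ i, 0 ≤ d i) (hsum : ∑ i, d i = 1) :
    PCD d ≤ ∑ i, doubleArc d i * (1 - doubleArc d i) :=
  calc PCD d
      ≤ ∑ i, d (i + 2) * (doubleArc d i + doubleArc d (i + 3) + doubleArc d (i + 4)) :=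
        sum_le_sum fun i _ ↦
          mul_le_mul_of_nonneg_left (C_le_doubleArc_add_add hd hsum i) (hd (i + 2))
    _ = ∑ i, doubleArc d i * (d (i + 2) + d (i + 3) + d (i + 4)) := by
        simp only [Fin.sum_univ_five, Fin.isValue, Fin.reduceAdd, zero_add]
        ring
    _ = ∑ i, doubleArc d i * (1 - doubleArc d i) := by
        simp only [one_sub_doubleArc hsum]

lemma PCD_le_six_fifths (hd : ∀ i, 0 ≤ d i) (hsum : ∑ i, d i = 1) : PCD d ≤ 6 / 5 := by
  have hcauchy : (2 : ℝ) ^ 2 ≤ 5 * ∑ i, doubleArc d i ^ 2 := by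
    simpa only [sum_doubleArc hsum, card_univ, Fintype.card_fin, Nat.cast_ofNat] using
      sq_sum_le_card_mul_sum_sq (s := univ) (f := doubleArc d)
  calc PCD d
      ≤ ∑ i, doubleArc d i * (1 - doubleArc d i) := PCD_le_sum_doubleArc_mul hd hsum
    _ = 2 - ∑ i, doubleArc d i ^ 2 := by
        simp only [mul_sub, mul_one, ← sq, sum_sub_distrib, sum_doubleArc hsum]
    _ ≤ 6 / 5 := by linarith

lemma nine_tenths_le_OPT (hsum : ∑ i, d i = 1) (hlower : ∀ i, 1 / 10 ≤ d i)
    (hupper : ∀ i, d i ≤ 3 / 10) : 9 / 10 ≤ OPT d := by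
  have hd : ∀ i, 0 ≤ d i := fun i ↦ by linarith [hlower i]
  have hone : ∀ i, doubleArc d i ≤ 1 / 2 + 1 / 10 := fun i ↦ by
    rw [doubleArc]
    linarith [hupper i, hupper (i + 1)]
  have htwo : ∀ i, doubleArc d i + doubleArc d (i + 1) ≤ 1 + 1 / 10 := fun i ↦ by
    have hcompl := one_sub_doubleArc hsum i
    have hnext : doubleArc d (i + 1) = d (i + 1) + d (i + 2) := by
      simp only [doubleArc, add_assoc, Fin.reduceAdd]
    linarith [hlower (i + 3), hlower (i + 4), hupper (i + 1)]
  exact le_ciInf fun a ↦ by linarith [one_sub_le_SC (by norm_num) hd hsum hone htwo a]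

end Instance

theorem near_equidistant_corollary (d : Fin 5 → ℝ) (hd : ∀ i, 0 ≤ d i)
    (hsum : ∑ i, d i = 1) (hP : ∀ i, |P d i - 1 / 5| ≤ 1 / 10) :
    PCD d ≤ (4 / 3) * OPT d ∧ PCD d ≤ 1.34 * OPT d := by
  have hgap : ∀ i, |d i - 1 / 5| ≤ 1 / 10 := fun i ↦ by
    simpa only [P, sub_add_cancel] using hP (i - 2)
  have hOPT : 9 / 10 ≤ OPT d := nine_tenths_le_OPT hsum
    (fun i ↦ by linarith [(abs_le.mp (hgap i)).1]) (fun i ↦ by linarith [(abs_le.mp (hgap i)).2])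
  have hPCD : PCD d ≤ 6 / 5 := PCD_le_six_fifths hd hsum
  constructor <;> linarith
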